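/- Let (X_t)_{t∈ℝ} be a strictly stationary ℝ^n-valued process with E[‖X_0‖^p]^{1/p} ≤ C for some constant C > 0 and some p > 1. Let h : ℝ^n → ℝ^m satisfy the growth–Lipschitz condition with constants c > 0 and a, where 1 ≤ a < p, and define Y_t = h(X_t). If (X_t)_{t∈ℝ} is θ-weakly dependent with coefficients (θ_X(r))_{r≥0}, then (Y_t)_{t∈ℝ} is θ-weakly dependent with coefficients θ_Y(r) = 𝒞 · θ_X(r)^{(p−a)/(p−1)} for some constant 𝒞 ≥ 0 independent of r. -/

import Mathlib

open MeasureTheory ProbabilityTheory Filter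

noncomputable section

/-- Covariance of two real-valued random variables. -/
def cov {Ω : Type*} [MeasurableSpace Ω] (μ : Measure Ω) (U V : Ω → ℝ) : ℝ :=
  (∫ ω, U ω * V ω ∂μ) - (∫ ω, U ω ∂μ) * (∫ ω, V ω ∂μ)

/-- `L` is a (nonnegative) Lipschitz bound for `F` with respect to the distance
`δ₁(x,y) = ∑ i ‖x i - y i‖` on `Eᵘ`. -/
def Delta1Lip {E : Type*} [NormedAddCommGroup E] {u : ℕ} (F : (Fin u → E) → ℝ) (L : ℝ) : Prop :=
  0 ≤ L ∧ ∀ x y : Fin u → E, |F x - F y| ≤ L * ∑ i, ‖x i - y i‖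

/-- θ-weak dependence of a process with coefficients `θ` and constant `c₀`: `θ r → 0` and the
covariance of a bounded measurable functional of the past and a Lipschitz functional of the
future, separated by a time gap `r`, is controlled by `c₀ v Lip(G) θ(r)`. -/
def ThetaWeaklyDependent {Ω : Type*} [MeasurableSpace Ω] (μ : Measure Ω)
    {E : Type*} [NormedAddCommGroup E] [MeasurableSpace E]
    (X : ℝ → Ω → E) (θ : ℝ → ℝ) (c₀ : ℝ) : Prop :=
  0 ≤ c₀ ∧ (∀ r, 0 ≤ θ r) ∧ Tendsto θ atTop (nhds 0) ∧
    ∀ (u v : ℕ), 0 < u → 0 < v → ∀ r : ℝ, 0 ≤ r →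
      ∀ (i : Fin u → ℝ) (j : Fin v → ℝ), Monotone i → Monotone j →
        (∀ a b, i a + r ≤ j b) →
        ∀ (F : (Fin u → E) → ℝ) (G : (Fin v → E) → ℝ) (LG : ℝ),
          Measurable F → Measurable G →
          (∀ x, |F x| ≤ 1) → (∀ x, |G x| ≤ 1) →
          Delta1Lip G LG →
          |cov μ (fun ω => F fun a => X (i a) ω) (fun ω => G fun b => X (j b) ω)| ≤
            c₀ * (v : ℝ) * LG * θ r

/-- Strict stationarity of an `ℝ`-indexed process: shifted finite-dimensional marginals have
the same distribution. -/
def StrictlyStationary {Ω : Type*} [MeasurableSpace Ω] (μ : Measure Ω)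
    {E : Type*} [MeasurableSpace E] (X : ℝ → Ω → E) : Prop :=
  ∀ (s : ℝ) (u : ℕ) (t : Fin u → ℝ),
    IdentDistrib (fun ω (a : Fin u) => X (t a + s) ω) (fun ω (a : Fin u) => X (t a) ω) μ μ

/-- The growth–Lipschitz condition with constants `c` and `a`:
`h 0 = 0` and `‖h x - h y‖ ≤ c ‖x - y‖ (1 + ‖x‖^(a-1) + ‖y‖^(a-1))`. -/
def GrowthLip {n m : ℕ} (h : EuclideanSpace ℝ (Fin n) → EuclideanSpace ℝ (Fin m))
    (c a : ℝ) : Prop :=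
  h 0 = 0 ∧ ∀ x y, ‖h x - h y‖ ≤ c * ‖x - y‖ * (1 + ‖x‖ ^ (a - 1) + ‖y‖ ^ (a - 1))

lemma cov_diff_le {Ω : Type*} [MeasurableSpace Ω] (μ : Measure Ω) [IsProbabilityMeasure μ]
    (U V W : Ω → ℝ) (hU : Measurable U) (hV : Measurable V) (hW : Measurable W)
    (bU : ∀ ω, |U ω| ≤ 1) (bV : ∀ ω, |V ω| ≤ 1) (bW : ∀ ω, |W ω| ≤ 1)
    (D : Ω → ℝ) (hD : Integrable D μ) (hVW : ∀ ω, |V ω - W ω| ≤ D ω) :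
    |cov μ U V| ≤ |cov μ U W| + 2 * ∫ ω, D ω ∂μ := by
  have ib : ∀ f : Ω → ℝ, Measurable f → (∀ ω, |f ω| ≤ 1) → Integrable f μ := fun f hf hb =>
    Integrable.of_bound hf.aestronglyMeasurable 1 (Eventually.of_forall hb)
  have bm : ∀ f g : Ω → ℝ, (∀ ω, |f ω| ≤ 1) → (∀ ω, |g ω| ≤ 1) → ∀ ω, |f ω * g ω| ≤ 1 := by
    intro f g hf hg ω
    rw [abs_mul]
    exact mul_le_one₀ (hf ω) (abs_nonneg _) (hg ω)
  have iV := ib V hV bV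
  have iW := ib W hW bW
  have iU := ib U hU bU
  have iUV : Integrable (fun ω => U ω * V ω) μ := ib _ (hU.mul hV) (bm U V bU bV)
  have iUW : Integrable (fun ω => U ω * W ω) μ := ib _ (hU.mul hW) (bm U W bU bW)
  have e1 : |∫ ω, U ω * V ω ∂μ - ∫ ω, U ω * W ω ∂μ| ≤ ∫ ω, D ω ∂μ := by
    rw [← integral_sub iUV iUW]
    refine norm_integral_le_of_norm_le (f := fun ω => U ω * V ω - U ω * W ω) hD
      (Eventually.of_forall fun ω => ?_)
    rw [← mul_sub, norm_mul]
    calc ‖U ω‖ * ‖V ω - W ω‖ ≤ 1 * ‖V ω - W ω‖ :=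
          mul_le_mul_of_nonneg_right (bU ω) (norm_nonneg _)
      _ ≤ D ω := by rw [one_mul]; exact hVW ω
  have e2 : |∫ ω, V ω ∂μ - ∫ ω, W ω ∂μ| ≤ ∫ ω, D ω ∂μ := by
    rw [← integral_sub iV iW]
    exact norm_integral_le_of_norm_le (f := fun ω => V ω - W ω) hD
      (Eventually.of_forall fun ω => hVW ω)
  have e3 : |∫ ω, U ω ∂μ| ≤ 1 := by
    have := norm_integral_le_of_norm_le (f := U) (μ := μ) (integrable_const (1:ℝ))
      (Eventually.of_forall bU)
    simpa using this
  have e4 : |(∫ ω, U ω ∂μ) * (∫ ω, V ω ∂μ - ∫ ω, W ω ∂μ)| ≤ ∫ ω, D ω ∂μ := by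
    rw [abs_mul]
    calc _ ≤ 1 * |∫ ω, V ω ∂μ - ∫ ω, W ω ∂μ| := mul_le_mul_of_nonneg_right e3 (abs_nonneg _)
      _ ≤ _ := by rw [one_mul]; exact e2
  have e5 : cov μ U V = cov μ U W + ((∫ ω, U ω * V ω ∂μ - ∫ ω, U ω * W ω ∂μ)
      - (∫ ω, U ω ∂μ) * (∫ ω, V ω ∂μ - ∫ ω, W ω ∂μ)) := by
    unfold cov; ring
  rw [e5]
  refine (abs_add_le _ _).trans ?_
  have := abs_sub (∫ ω, U ω * V ω ∂μ - ∫ ω, U ω * W ω ∂μ)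
    ((∫ ω, U ω ∂μ) * (∫ ω, V ω ∂μ - ∫ ω, W ω ∂μ))
  linarith

lemma growthLip_continuous {n m : ℕ}
    (h : EuclideanSpace ℝ (Fin n) → EuclideanSpace ℝ (Fin m))
    (c a : ℝ) (ha : 1 ≤ a) (hGL : GrowthLip h c a) : Continuous h := by
  rw [continuous_iff_continuousAt]
  intro x
  rw [ContinuousAt, tendsto_iff_norm_sub_tendsto_zero]
  have hc : Continuous (fun y => c * ‖y - x‖ * (1 + ‖y‖ ^ (a - 1) + ‖x‖ ^ (a - 1))) := by
    have : Continuous (fun y : EuclideanSpace ℝ (Fin n) => ‖y‖ ^ (a - 1)) :=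
      continuous_norm.rpow_const (fun _ => Or.inr (by linarith))
    fun_prop
  have := hc.tendsto x
  simp only [sub_self, norm_zero, mul_zero, zero_mul] at this
  exact squeeze_zero (fun _ => norm_nonneg _) (fun y => hGL.2 y x) this

/-- radial truncation -/
def trunc {E : Type*} [NormedAddCommGroup E] [NormedSpace ℝ E] (M : ℝ) (x : E) : E :=
  (M / max M ‖x‖) • x

section
variable {E : Type*} [NormedAddCommGroup E] [NormedSpace ℝ E]

lemma trunc_eq {M : ℝ} (hM : 1 ≤ M) {x : E} (hx : ‖x‖ ≤ M) : trunc M x = x := by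
  unfold trunc
  rw [max_eq_left hx, div_self (by linarith), one_smul]

lemma trunc_norm {M : ℝ} (hM : 1 ≤ M) (x : E) : ‖trunc M x‖ ≤ M ∧ ‖trunc M x‖ ≤ ‖x‖ := by
  have h0 : 0 < max M ‖x‖ := lt_max_of_lt_left (by linarith)
  unfold trunc
  rw [norm_smul, Real.norm_of_nonneg (by positivity)]
  constructor
  · rw [div_mul_eq_mul_div, div_le_iff₀ h0]
    exact mul_le_mul_of_nonneg_left (le_max_right _ _) (by linarith)
  · have : M / max M ‖x‖ ≤ 1 := (div_le_one h0).2 (le_max_left _ _)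
    nlinarith [norm_nonneg x]

lemma trunc_sub {M : ℝ} (hM : 1 ≤ M) (x : E) : ‖x - trunc M x‖ ≤ ‖x‖ := by
  have h0 : 0 < max M ‖x‖ := lt_max_of_lt_left (by linarith)
  have h1 : M / max M ‖x‖ ≤ 1 := (div_le_one h0).2 (le_max_left _ _)
  have h2 : 0 ≤ M / max M ‖x‖ := by positivity
  have : x - trunc M x = (1 - M / max M ‖x‖) • x := by
    unfold trunc; rw [sub_smul, one_smul]
  rw [this, norm_smul, Real.norm_of_nonneg (by linarith)]
  nlinarith [norm_nonneg x]

lemma trunc_lip {M : ℝ} (hM : 1 ≤ M) (x y : E) :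
    ‖trunc M x - trunc M y‖ ≤ 2 * ‖x - y‖ := by
  have hx : 0 < max M ‖x‖ := lt_max_of_lt_left (by linarith)
  have hy : 0 < max M ‖y‖ := lt_max_of_lt_left (by linarith)
  have h1 : M / max M ‖x‖ ≤ 1 := (div_le_one hx).2 (le_max_left _ _)
  have h2 : 0 ≤ M / max M ‖x‖ := by positivity
  have h3 : ‖y‖ / max M ‖y‖ ≤ 1 := (div_le_one hy).2 (le_max_right _ _)
  have h4 : 0 ≤ ‖y‖ / max M ‖y‖ := by positivity
  have e : trunc M x - trunc M y = (M / max M ‖x‖) • (x - y)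
      + (M / max M ‖x‖ - M / max M ‖y‖) • y := by
    unfold trunc; rw [smul_sub, sub_smul]; abel
  have e2 : (M / max M ‖x‖ - M / max M ‖y‖) * ‖y‖ =
      (max M ‖y‖ - max M ‖x‖) * ((M / max M ‖x‖) * (‖y‖ / max M ‖y‖)) := by
    field_simp
  have h5 : |max M ‖y‖ - max M ‖x‖| ≤ ‖x - y‖ := by
    have := abs_max_sub_max_le_max M ‖y‖ M ‖x‖
    refine this.trans ?_
    simp only [sub_self, abs_zero]
    refine max_le (norm_nonneg _) ?_
    rw [norm_sub_rev]
    exact abs_norm_sub_norm_le y x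
  rw [e]
  refine (norm_add_le _ _).trans ?_
  rw [norm_smul, norm_smul, Real.norm_of_nonneg h2, Real.norm_eq_abs]
  have e3 : |M / max M ‖x‖ - M / max M ‖y‖| * ‖y‖ =
      |max M ‖y‖ - max M ‖x‖| * ((M / max M ‖x‖) * (‖y‖ / max M ‖y‖)) := by
    have := congrArg abs e2
    rw [abs_mul, abs_mul, abs_of_nonneg (norm_nonneg y), abs_of_nonneg (mul_nonneg h2 h4)] at this
    exact this
  rw [e3]
  have h6 : (M / max M ‖x‖) * (‖y‖ / max M ‖y‖) ≤ 1 := mul_le_one₀ h1 h4 h3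
  have h7 : |max M ‖y‖ - max M ‖x‖| * ((M / max M ‖x‖) * (‖y‖ / max M ‖y‖)) ≤ ‖x - y‖ * 1 :=
    mul_le_mul h5 h6 (mul_nonneg h2 h4) (norm_nonneg _)
  have h8 : M / max M ‖x‖ * ‖x - y‖ ≤ 1 * ‖x - y‖ :=
    mul_le_mul_of_nonneg_right h1 (norm_nonneg _)
  linarith

end

lemma htrunc_lip {n m : ℕ} (h : EuclideanSpace ℝ (Fin n) → EuclideanSpace ℝ (Fin m))
    (c a : ℝ) (hc : 0 < c) (ha : 1 ≤ a) (hGL : GrowthLip h c a) {M : ℝ} (hM : 1 ≤ M) (x y) :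
    ‖h (trunc M x) - h (trunc M y)‖ ≤ 6 * c * M ^ (a - 1) * ‖x - y‖ := by
  have h1 := hGL.2 (trunc M x) (trunc M y)
  have hx := Real.rpow_le_rpow (norm_nonneg _) (trunc_norm hM x).1 (by linarith : 0 ≤ a - 1)
  have hy := Real.rpow_le_rpow (norm_nonneg _) (trunc_norm hM y).1 (by linarith : 0 ≤ a - 1)
  have h1M := Real.one_le_rpow hM (by linarith : 0 ≤ a - 1)
  have hl := trunc_lip hM x y
  calc _ ≤ _ := h1
    _ ≤ c * (2 * ‖x - y‖) * (3 * M ^ (a - 1)) := by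
      gcongr
      linarith
    _ = _ := by ring

lemma htrunc_sub {n m : ℕ} (h : EuclideanSpace ℝ (Fin n) → EuclideanSpace ℝ (Fin m))
    (c a p : ℝ) (hc : 0 < c) (ha : 1 ≤ a) (hap : a < p) (hGL : GrowthLip h c a)
    {M : ℝ} (hM : 1 ≤ M) (x) :
    ‖h x - h (trunc M x)‖ ≤ 3 * c * M ^ (a - p) * ‖x‖ ^ p := by
  by_cases hx : ‖x‖ ≤ M
  · rw [trunc_eq hM hx, sub_self, norm_zero]
    positivity
  · push Not at hx
    have hx0 : 0 < ‖x‖ := by linarith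
    have h1 := hGL.2 x (trunc M x)
    have hy := Real.rpow_le_rpow (norm_nonneg _) (trunc_norm hM x).2 (by linarith : 0 ≤ a - 1)
    have h1M := Real.one_le_rpow (hM.trans hx.le) (by linarith : 0 ≤ a - 1)
    have hl := trunc_sub hM x
    have e1 : ‖x‖ * ‖x‖ ^ (a - 1) = ‖x‖ ^ (a - p) * ‖x‖ ^ p := by
      rw [← Real.rpow_add hx0, ← Real.rpow_one_add' hx0.le (by linarith)]
      congr 1; ring
    have e2 : ‖x‖ ^ (a - p) ≤ M ^ (a - p) :=
      Real.rpow_le_rpow_of_nonpos (by linarith) hx.le (by linarith)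
    calc _ ≤ _ := h1
      _ ≤ c * ‖x‖ * (3 * ‖x‖ ^ (a - 1)) := by
        gcongr
        linarith
      _ = 3 * c * (‖x‖ * ‖x‖ ^ (a - 1)) := by ring
      _ = 3 * c * (‖x‖ ^ (a - p) * ‖x‖ ^ p) := by rw [e1]
      _ ≤ 3 * c * (M ^ (a - p) * ‖x‖ ^ p) := by gcongr
      _ = _ := by ring

lemma growth_norm {n m : ℕ} (h : EuclideanSpace ℝ (Fin n) → EuclideanSpace ℝ (Fin m))
    (c a p : ℝ) (hc : 0 < c) (ha : 1 ≤ a) (hap : a < p) (hGL : GrowthLip h c a) (x) :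
    ‖h x‖ ≤ 3 * c + 3 * c * ‖x‖ ^ p := by
  have h1 := hGL.2 x 0
  rw [hGL.1, sub_zero, sub_zero, norm_zero] at h1
  have h0 : (0:ℝ) ^ (a - 1) ≤ 1 := Real.rpow_le_one le_rfl zero_le_one (by linarith)
  have hxn := norm_nonneg x
  rcases le_total ‖x‖ 1 with hx | hx
  · have h2 := Real.rpow_le_one hxn hx (by linarith : 0 ≤ a - 1)
    have h3 : 0 ≤ 3 * c * ‖x‖ ^ p := by positivity
    calc _ ≤ _ := h1
      _ ≤ c * 1 * (1 + 1 + 1) := by gcongr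
      _ ≤ _ := by linarith
  · have h2 := Real.one_le_rpow hx (by linarith : 0 ≤ a - 1)
    have e1 : ‖x‖ * ‖x‖ ^ (a - 1) = ‖x‖ ^ a := by
      rw [← Real.rpow_one_add' hxn (by linarith)]
      congr 1; ring
    have e2 : ‖x‖ ^ a ≤ ‖x‖ ^ p := Real.rpow_le_rpow_of_exponent_le hx hap.le
    calc _ ≤ _ := h1
      _ ≤ c * ‖x‖ * (3 * ‖x‖ ^ (a - 1)) := by
        gcongr
        linarith
      _ = 3 * c * (‖x‖ * ‖x‖ ^ (a - 1)) := by ring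
      _ = 3 * c * ‖x‖ ^ a := by rw [e1]
      _ ≤ 3 * c * ‖x‖ ^ p := by gcongr
      _ ≤ _ := by linarith

lemma stat_moment {Ω : Type*} [MeasurableSpace Ω] (μ : Measure Ω)
    {n : ℕ} (X : ℝ → Ω → EuclideanSpace ℝ (Fin n)) (hstat : StrictlyStationary μ X) (p : ℝ)
    (hint : Integrable (fun ω => ‖X 0 ω‖ ^ p) μ) (t : ℝ) :
    Integrable (fun ω => ‖X t ω‖ ^ p) μ ∧
      ∫ ω, ‖X t ω‖ ^ p ∂μ = ∫ ω, ‖X 0 ω‖ ^ p ∂μ := by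
  have h1 := hstat t 1 (fun _ => 0)
  have hm : Measurable (fun x : Fin 1 → EuclideanSpace ℝ (Fin n) => ‖x 0‖ ^ p) := by
    fun_prop
  have h2 := h1.comp hm
  simp only [Function.comp_def, zero_add] at h2
  exact ⟨h2.integrable_iff.2 hint, h2.integral_eq⟩

lemma cov_replace {Ω : Type*} [MeasurableSpace Ω] (μ : Measure Ω) [IsProbabilityMeasure μ]
    {n m : ℕ} (X : ℝ → Ω → EuclideanSpace ℝ (Fin n))
    (hXmeas : ∀ t, Measurable (X t)) (hstat : StrictlyStationary μ X) (p : ℝ)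
    (hint : Integrable (fun ω => ‖X 0 ω‖ ^ p) μ)
    (h g : EuclideanSpace ℝ (Fin n) → EuclideanSpace ℝ (Fin m))
    (hh : Continuous h) (hg : Continuous g) (A B : ℝ)
    (hAB : ∀ x, ‖h x - g x‖ ≤ A + B * ‖x‖ ^ p)
    (U : Ω → ℝ) (hU : Measurable U) (bU : ∀ ω, |U ω| ≤ 1)
    {v : ℕ} (j : Fin v → ℝ) (G : (Fin v → EuclideanSpace ℝ (Fin m)) → ℝ) (LG : ℝ)
    (hG : Measurable G) (bG : ∀ x, |G x| ≤ 1) (hL : Delta1Lip G LG) :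
    |cov μ U (fun ω => G fun b => h (X (j b) ω))| ≤
      |cov μ U (fun ω => G fun b => g (X (j b) ω))|
        + 2 * (v * LG * (A + B * ∫ ω, ‖X 0 ω‖ ^ p ∂μ)) := by
  have hI : ∀ b : Fin v, Integrable (fun ω => A + B * ‖X (j b) ω‖ ^ p) μ := fun b =>
    (integrable_const A).add ((stat_moment μ X hstat p hint (j b)).1.const_mul B)
  have hS := integrable_finsetSum Finset.univ (fun b _ => hI b)
  have key := cov_diff_le μ U (fun ω => G fun b => h (X (j b) ω))
    (fun ω => G fun b => g (X (j b) ω)) hU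
    (hG.comp (measurable_pi_lambda _ fun b => hh.measurable.comp (hXmeas _)))
    (hG.comp (measurable_pi_lambda _ fun b => hg.measurable.comp (hXmeas _)))
    bU (fun _ => bG _) (fun _ => bG _)
    (fun ω => LG * ∑ b, (A + B * ‖X (j b) ω‖ ^ p)) (hS.const_mul LG)
    (fun ω => (hL.2 _ _).trans
      (mul_le_mul_of_nonneg_left (Finset.sum_le_sum fun b _ => hAB _) hL.1))
  refine key.trans (le_of_eq ?_)
  congr 2
  rw [integral_const_mul, integral_finsetSum _ (fun b _ => hI b)]
  have : ∀ b : Fin v, ∫ ω, (A + B * ‖X (j b) ω‖ ^ p) ∂μ = A + B * ∫ ω, ‖X 0 ω‖ ^ p ∂μ := by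
    intro b
    rw [integral_add (integrable_const A)
      ((stat_moment μ X hstat p hint (j b)).1.const_mul B), integral_const_mul,
      (stat_moment μ X hstat p hint (j b)).2]
    simp
  simp only [this, Finset.sum_const, Finset.card_univ, Fintype.card_fin, nsmul_eq_mul]
  ring

/-- Optimisation over the truncation level. -/
lemma optimise (p a θ Q R K : ℝ) (ha : 1 ≤ a) (hap : a < p) (hθ : 0 ≤ θ) (hK : 0 ≤ K)
    (h1 : ∀ M : ℝ, 1 ≤ M → Q ≤ K * (M ^ (a - 1) * θ + M ^ (a - p)))
    (h2 : Q ≤ R) (hR : 0 ≤ R) :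
    Q ≤ (2 * K + R) * θ ^ ((p - a) / (p - 1)) := by
  have hβ : 0 < (p - a) / (p - 1) := div_pos (by linarith) (by linarith)
  rcases hθ.eq_or_lt with h0 | h0
  · subst h0
    rw [Real.zero_rpow hβ.ne', mul_zero]
    have ht : Tendsto (fun M : ℝ => K * (M ^ (a - 1) * 0 + M ^ (a - p))) atTop (nhds 0) := by
      have := (tendsto_rpow_neg_atTop (by linarith : 0 < p - a)).const_mul K
      simpa using this
    exact ge_of_tendsto ht ((eventually_ge_atTop 1).mono h1)
  · rcases le_total θ 1 with h3 | h3
    · have hp1 : p - 1 ≠ 0 := by linarith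
      have hM : 1 ≤ θ ^ (-(1 / (p - 1))) :=
        Real.one_le_rpow_of_pos_of_le_one_of_nonpos h0 h3
          (neg_nonpos.2 (div_nonneg zero_le_one (by linarith)))
      have := h1 _ hM
      rw [← Real.rpow_mul hθ, ← Real.rpow_mul hθ, ← Real.rpow_add_one h0.ne'] at this
      have e1 : -(1 / (p - 1)) * (a - 1) + 1 = (p - a) / (p - 1) := by field_simp; ring
      have e2 : -(1 / (p - 1)) * (a - p) = (p - a) / (p - 1) := by field_simp; ring
      rw [e1, e2] at this
      have h5 : 0 ≤ R * θ ^ ((p - a) / (p - 1)) := by positivity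
      linarith
    · have h4 := Real.one_le_rpow h3 hβ.le
      nlinarith

/-- Hereditary property of θ-weak dependence under a growth–Lipschitz transformation
(Proposition 2.14 of Curato–Stelzer). -/
theorem theta_hereditary_growthLip
    {Ω : Type*} [MeasurableSpace Ω] (μ : Measure Ω) [IsProbabilityMeasure μ]
    {n m : ℕ} (X : ℝ → Ω → EuclideanSpace ℝ (Fin n))
    (hXmeas : ∀ t, Measurable (X t))
    (hstat : StrictlyStationary μ X)
    (p C : ℝ) (hp : 1 < p) (hC : 0 < C)
    (hint : Integrable (fun ω => ‖X 0 ω‖ ^ p) μ)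
    (hmom : (∫ ω, ‖X 0 ω‖ ^ p ∂μ) ^ (1 / p) ≤ C)
    (h : EuclideanSpace ℝ (Fin n) → EuclideanSpace ℝ (Fin m))
    (c a : ℝ) (hc : 0 < c) (ha : 1 ≤ a) (hap : a < p)
    (hGL : GrowthLip h c a)
    (θX : ℝ → ℝ) (c₀ : ℝ)
    (hX : ThetaWeaklyDependent μ X θX c₀) :
    ∃ C' c₁ : ℝ, 0 ≤ C' ∧
      ThetaWeaklyDependent μ (fun t ω => h (X t ω))
        (fun r => C' * θX r ^ ((p - a) / (p - 1))) c₁ := by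
  obtain ⟨hc₀, hθ0, hθt, hcov⟩ := hX
  set P : ℝ := ∫ ω, ‖X 0 ω‖ ^ p ∂μ with hP
  have hP0 : 0 ≤ P := integral_nonneg fun ω => by positivity
  have hβ : 0 < (p - a) / (p - 1) := div_pos (by linarith) (by linarith)
  have hcont := growthLip_continuous h c a ha hGL
  refine ⟨2 * (6 * c * (c₀ + P)) + 6 * c * (1 + P), 1, by positivity, zero_le_one, ?_, ?_, ?_⟩
  · intro r
    have := Real.rpow_nonneg (hθ0 r) ((p - a) / (p - 1))
    positivity
  · have := (hθt.rpow_const (Or.inr hβ.le : (0:ℝ) ≠ 0 ∨ 0 ≤ (p - a) / (p - 1))).const_mul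
      (2 * (6 * c * (c₀ + P)) + 6 * c * (1 + P))
    rwa [Real.zero_rpow hβ.ne', mul_zero] at this
  · intro u v hu hv r hr i j hi hj hij F G LG hF hG bF bG hL
    have hLG := hL.1
    have hU : Measurable (fun ω => F fun b => h (X (i b) ω)) :=
      hF.comp (measurable_pi_lambda _ fun b => hcont.measurable.comp (hXmeas _))
    have key := optimise p a (θX r)
      |cov μ (fun ω => F fun b => h (X (i b) ω)) (fun ω => G fun b => h (X (j b) ω))|
      (v * LG * (6 * c * (1 + P))) (v * LG * (6 * c * (c₀ + P))) ha hap (hθ0 r)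
      (by positivity) ?_ ?_ (by positivity)
    · refine key.trans (le_of_eq ?_)
      ring
    · intro M hM
      have hlip := htrunc_lip h c a hc ha hGL hM
      have hgc : Continuous (fun x => h (trunc M x)) := by
        have : LipschitzWith (6 * c * M ^ (a - 1)).toNNReal (fun x => h (trunc M x)) :=
          LipschitzWith.of_dist_le_mul fun x y => by
            rw [dist_eq_norm, dist_eq_norm, Real.coe_toNNReal _ (by positivity)]
            exact hlip x y
        exact this.continuous
      have hsub := htrunc_sub h c a p hc ha hap hGL hM
      have k1 := cov_replace μ X hXmeas hstat p hint h (fun x => h (trunc M x)) hcont hgc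
        0 (3 * c * M ^ (a - p)) (fun x => by rw [zero_add]; exact hsub x) _ hU (fun _ => bF _)
        j G LG hG bG hL
      have k2 := hcov u v hu hv r hr i j hi hj hij (fun x => F fun b => h (x b))
        (fun x => G fun b => h (trunc M (x b))) (LG * (6 * c * M ^ (a - 1)))
        (hF.comp (measurable_pi_lambda _ fun b => hcont.measurable.comp (measurable_pi_apply b)))
        (hG.comp (measurable_pi_lambda _ fun b => hgc.measurable.comp (measurable_pi_apply b)))
        (fun _ => bF _) (fun _ => bG _)
        ⟨by positivity, fun x y => by
          refine (hL.2 _ _).trans ?_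
          rw [mul_assoc LG, Finset.mul_sum _ _ (6 * c * M ^ (a - 1))]
          exact mul_le_mul_of_nonneg_left (Finset.sum_le_sum fun b _ => hlip _ _) hLG⟩
      have hM1 : 0 ≤ M ^ (a - 1) := by positivity
      have hM2 : 0 ≤ M ^ (a - p) := by positivity
      have hθr := hθ0 r
      have s1 : 0 ≤ v * LG * (6 * c * P) * (M ^ (a - 1) * θX r) := by positivity
      have s2 : 0 ≤ v * LG * (6 * c * c₀) * M ^ (a - p) := by positivity
      rw [← hP] at k1
      linarith
    · have k1 := cov_replace μ X hXmeas hstat p hint h (fun _ => 0) hcont continuous_const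
        (3 * c) (3 * c)
        (fun x => by rw [sub_zero]; exact growth_norm h c a p hc ha hap hGL x) _ hU
        (fun _ => bF _) j G LG hG bG hL
      have k2 : cov μ (fun ω => F fun b => h (X (i b) ω))
          (fun ω => G fun _ => (0 : EuclideanSpace ℝ (Fin m))) = 0 := by
        simp [cov, integral_mul_const]
      rw [k2, abs_zero, ← hP] at k1
      linarith

end
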